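/- Let k ≥ 2, let B₁ = (b₁,…,b_k) be any digit block of length k with b₁ = b₂ = 1, and let B₂ = (0,…,0) be the all-zeros block of length k. Then there exists N₀ ∈ ℕ such that for all N ≥ N₀, occ(c, B₁, N) − occ(c, B₂, N) ≥ N/(10^{k+1}·log N). -/

import Mathlib

open scoped Classical

/-- The `i`-th decimal digit (for `i ≥ 1`) of a real number `α`, using the floor
convention, which for numbers admitting two decimal expansions selects the
expansion ending in a tail of `0`s. -/
noncomputable def digit (α : ℝ) (i : ℕ) : ℕ := (⌊α * 10 ^ i⌋ % 10).toNat

/-- Number of occurrences of the digit block `B` (of length `k`) as consecutive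
digits among the first `N` decimal digits of `α`:
`occ α B N = #{i : 1 ≤ i ≤ N - k + 1 ∧ (α_i, …, α_{i+k-1}) = B}`. -/
noncomputable def occ {k : ℕ} (α : ℝ) (B : Fin k → Fin 10) (N : ℕ) : ℕ :=
  ((Finset.Icc 1 N).filter fun i =>
    i + k ≤ N + 1 ∧ ∀ j : Fin k, digit α (i + (j : ℕ)) = (B j : ℕ)).card

/-- Discrepancy of the first `N` terms of a sequence `(x_n)_{n ≥ 1}` of points of `[0,1)`:
the supremum over `0 ≤ a < b < 1` of `|#{n ≤ N : x n ∈ [a,b)}/N - (b - a)|`. -/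
noncomputable def discSeq (x : ℕ → ℝ) (N : ℕ) : ℝ :=
  sSup {d : ℝ | ∃ a b : ℝ, 0 ≤ a ∧ a < b ∧ b < 1 ∧
    d = |(((Finset.Icc 1 N).filter fun n => x n ∈ Set.Ico a b).card : ℝ) / N - (b - a)|}

/-- Discrepancy of a real number for base 10: the discrepancy of the sequence
`(10^(n-1) α mod 1)_{n ≥ 1}`. -/
noncomputable def D (α : ℝ) (N : ℕ) : ℝ :=
  discSeq (fun n => Int.fract (10 ^ (n - 1) * α)) N

/-- `T v` is the total number of digits in the concatenation of the decimal
representations of `1, 2, …, v`. -/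
def T (v : ℕ) : ℕ := ∑ j ∈ Finset.Icc 1 v, (Nat.digits 10 j).length

/-- The Champernowne constant `c = 0.123456789101112…`, the concatenation of the
positive integers in base 10: the term `m` ends at decimal position `T m`. -/
noncomputable def champ : ℝ := ∑' m : ℕ, (m : ℝ) / 10 ^ T m

/-- `vOf N` is the least `v` with `T v ≥ N` (the term of the concatenation
containing the `N`-th digit). -/
noncomputable def vOf (N : ℕ) : ℕ := sInf {v | N ≤ T v}

/-- `nOf N` is the number of decimal digits of `vOf N`. -/
noncomputable def nOf (N : ℕ) : ℕ := (Nat.digits 10 (vOf N)).length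

/-- Number of non-overlapping occurrences of the block `B` (length `k`) in the string
`s_ℓ` (the concatenation of all `ℓ`-digit integers in increasing order): the number of
pairs `(y, j)` with `10^(ℓ-1) ≤ y < 10^ℓ`, `1 ≤ j ≤ ℓ - k + 1`, such that the digits of
`y` in positions `j, …, j + k - 1` (counted from the left) equal `B`. -/
def occNoSeg {k : ℕ} (B : Fin k → Fin 10) (ℓ : ℕ) : ℕ :=
  ((Finset.Ico (10 ^ (ℓ - 1)) (10 ^ ℓ) ×ˢ Finset.Icc 1 (ℓ - k + 1)).filter fun p =>
    ∀ i : Fin k, p.1 / 10 ^ (ℓ - (p.2 + (i : ℕ))) % 10 = (B i : ℕ)).card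

/-- Number of occurrences of the block `B` (length `k ≤ ℓ`) in the string `s_ℓ` that
straddle the boundary between two consecutive `ℓ`-digit terms `y` and `y + 1`:
the number of pairs `(y, j)` with `10^(ℓ-1) ≤ y < 10^ℓ - 1` and `1 ≤ j ≤ k - 1` such
that the last `j` digits of `y` are `(b₁, …, b_j)` and the first `k - j` digits of
`y + 1` are `(b_{j+1}, …, b_k)`. -/
def occOSeg {k : ℕ} (B : Fin k → Fin 10) (ℓ : ℕ) : ℕ :=
  ((Finset.Ico (10 ^ (ℓ - 1)) (10 ^ ℓ - 1) ×ˢ Finset.Ico 1 k).filter fun p =>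
    (∀ i : Fin k, (i : ℕ) < p.2 → p.1 / 10 ^ (p.2 - 1 - (i : ℕ)) % 10 = (B i : ℕ)) ∧
    (∀ i : Fin k, p.2 ≤ (i : ℕ) →
      (p.1 + 1) / 10 ^ (ℓ - 1 - ((i : ℕ) - p.2)) % 10 = (B i : ℕ))).card

/-- The integer whose decimal representation is the concatenation of those of `1, …, y`. -/
def champPrefix : ℕ → ℕ
  | 0 => 0
  | y + 1 => champPrefix y * 10 ^ (Nat.digits 10 (y + 1)).length + (y + 1)

lemma T_succ (y : ℕ) : T (y + 1) = T y + (Nat.digits 10 (y + 1)).length := by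
  unfold T
  rw [Finset.sum_Icc_succ_top (by omega)]

lemma digits_length_succ_pos (y : ℕ) : 0 < (Nat.digits 10 (y + 1)).length := by
  rw [Nat.lt_digits_length_iff (by norm_num)]
  simp

lemma T_strictMono : StrictMono T :=
  strictMono_nat_of_lt_succ fun y => by
    have := T_succ y
    have := digits_length_succ_pos y
    omega

lemma sum_range_eq_champPrefix (y : ℕ) :
    ∑ m ∈ Finset.range (y + 1), (m : ℝ) / 10 ^ T m = champPrefix y / 10 ^ T y := by
  induction y with
  | zero => simp [champPrefix]
  | succ y ih =>
    rw [Finset.sum_range_succ, ih, T_succ, champPrefix, pow_add]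
    push_cast
    field_simp

lemma succ_le_ten_pow_length (m : ℕ) : m + 1 ≤ 10 ^ (Nat.digits 10 m).length :=
  Nat.lt_base_pow_length_digits (by norm_num)

lemma champPrefix_succ_div_antitone :
    Antitone fun y => ((champPrefix y : ℝ) + 1) / 10 ^ T y := by
  refine antitone_nat_of_succ_le fun y => ?_
  rw [T_succ, champPrefix, pow_add, div_le_div_iff₀ (by positivity) (by positivity)]
  have h : ((y + 1 : ℕ) : ℝ) + 1 ≤ 10 ^ (Nat.digits 10 (y + 1)).length := by
    exact_mod_cast succ_le_ten_pow_length (y + 1)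
  have h2 : (0 : ℝ) < 10 ^ T y := by positivity
  push_cast at h ⊢
  nlinarith [mul_le_mul_of_nonneg_left h h2.le]

lemma champPrefix_succ_div_lt (y : ℕ) :
    ((champPrefix (y + 2) : ℝ) + 1) / 10 ^ T (y + 2) < (champPrefix y + 1) / 10 ^ T y := by
  have key : champPrefix (y + 2) + 1 < (champPrefix y + 1) *
      (10 ^ (Nat.digits 10 (y + 1)).length * 10 ^ (Nat.digits 10 (y + 2)).length) := by
    have h1 := succ_le_ten_pow_length (y + 1)
    have h2 := succ_le_ten_pow_length (y + 2)
    obtain ⟨p, hp⟩ := Nat.exists_eq_succ_of_ne_zero (digits_length_succ_pos y).ne'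
    obtain ⟨q, hq⟩ := Nat.exists_eq_succ_of_ne_zero (digits_length_succ_pos (y + 1)).ne'
    simp only [champPrefix]
    rw [show y + 1 + 1 = y + 2 from rfl] at *
    rw [hp, pow_succ] at h1 ⊢
    rw [hq, pow_succ] at h2 ⊢
    generalize 10 ^ p = P at *
    generalize 10 ^ q = Q at *
    rcases Nat.lt_or_ge (y + 2) (P * 10) with h | h
    · have := Nat.mul_le_mul_right (Q * 10) (show y + 3 ≤ P * 10 by omega)
      linarith
    · have := Nat.mul_le_mul_right (Q * 10) h1
      have : y + 4 ≤ Q * 10 := by omega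
      linarith
  rw [T_succ, T_succ, div_lt_div_iff₀ (by positivity) (by positivity), add_assoc, pow_add,
    pow_add]
  have key' : (champPrefix (y + 2) : ℝ) + 1 < (champPrefix y + 1) *
      (10 ^ (Nat.digits 10 (y + 1)).length * 10 ^ (Nat.digits 10 (y + 2)).length) := by
    exact_mod_cast key
  have h2 : (0 : ℝ) < 10 ^ T y := by positivity
  calc _ < _ := mul_lt_mul_of_pos_right key' h2
    _ = _ := by ring

lemma champ_summable : Summable fun m : ℕ => (m : ℝ) / 10 ^ T m := by
  refine summable_of_sum_range_le (c := 1) (fun m => by positivity) fun n => ?_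
  calc ∑ m ∈ Finset.range n, (m : ℝ) / 10 ^ T m
      ≤ ∑ m ∈ Finset.range (n + 1), (m : ℝ) / 10 ^ T m :=
        Finset.sum_le_sum_of_subset_of_nonneg (Finset.range_mono (by omega))
          fun _ _ _ => by positivity
    _ = champPrefix n / 10 ^ T n := sum_range_eq_champPrefix n
    _ ≤ (champPrefix n + 1) / 10 ^ T n := by gcongr; linarith
    _ ≤ (champPrefix 0 + 1) / 10 ^ T 0 := champPrefix_succ_div_antitone (Nat.zero_le n)
    _ = 1 := by simp [champPrefix, T]

lemma champPrefix_div_le_champ (y : ℕ) : (champPrefix y : ℝ) / 10 ^ T y ≤ champ := by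
  rw [← sum_range_eq_champPrefix]
  exact champ_summable.sum_le_tsum _ fun _ _ => by positivity

lemma champ_le (y : ℕ) : champ ≤ ((champPrefix y : ℝ) + 1) / 10 ^ T y := by
  refine le_of_tendsto champ_summable.hasSum.tendsto_sum_nat ?_
  filter_upwards [Filter.eventually_gt_atTop y] with n hn
  obtain ⟨m, rfl⟩ : ∃ m, n = m + 1 := ⟨n - 1, by omega⟩
  rw [sum_range_eq_champPrefix]
  calc (champPrefix m : ℝ) / 10 ^ T m ≤ (champPrefix m + 1) / 10 ^ T m := by gcongr; linarith
    _ ≤ _ := champPrefix_succ_div_antitone (by omega)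

lemma digit_champ {y e : ℕ} (he : e < (Nat.digits 10 y).length) :
    digit champ (T y - e) = y / 10 ^ e % 10 := by
  obtain ⟨x, rfl⟩ : ∃ x, y = x + 1 := by
    cases y with
    | zero => simp at he
    | succ x => exact ⟨x, rfl⟩
  have heT : e ≤ T (x + 1) := by rw [T_succ]; omega
  have hlo := champPrefix_div_le_champ (x + 1)
  have hhi := (champ_le _).trans_lt (champPrefix_succ_div_lt (x + 1))
  rw [div_le_iff₀ (by positivity)] at hlo
  rw [lt_div_iff₀ (by positivity)] at hhi
  have hpow : (10 : ℝ) ^ T (x + 1) = 10 ^ (T (x + 1) - e) * 10 ^ e := by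
    rw [← pow_add, Nat.sub_add_cancel heT]
  have hfloor : ⌊champ * 10 ^ (T (x + 1) - e)⌋ = ((champPrefix (x + 1) / 10 ^ e : ℕ) : ℤ) := by
    rw [hpow, ← mul_assoc] at hlo hhi
    have hpos : (0 : ℝ) < 10 ^ e := by positivity
    have h1 : ((champPrefix (x + 1) / 10 ^ e : ℕ) : ℝ) * 10 ^ e ≤ champPrefix (x + 1) := by
      exact_mod_cast Nat.div_mul_le_self _ _
    have h2 : (champPrefix (x + 1) : ℝ) + 1 ≤
        (((champPrefix (x + 1) / 10 ^ e : ℕ) : ℝ) + 1) * 10 ^ e := by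
      exact_mod_cast Nat.lt_mul_of_div_lt (Nat.lt_succ_self _) (by positivity)
    rw [Int.floor_eq_iff, Int.cast_natCast]
    exact ⟨le_of_mul_le_mul_right (h1.trans hlo) hpos,
      lt_of_mul_lt_mul_right (hhi.trans_le h2) hpos.le⟩
  have hdiv : champPrefix (x + 1) / 10 ^ e % 10 = (x + 1) / 10 ^ e % 10 := by
    obtain ⟨d, hd⟩ := Nat.exists_eq_add_of_lt he
    rw [champPrefix, hd, show champPrefix x * 10 ^ (e + d + 1) + (x + 1) =
      x + 1 + 10 ^ e * (champPrefix x * 10 ^ d * 10) by ring,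
      Nat.add_mul_div_left _ _ (by positivity), Nat.add_mul_mod_self_right]
  unfold digit
  rw [hfloor, ← hdiv]
  omega

lemma exists_T_sub {i : ℕ} (hi : 1 ≤ i) :
    ∃ y e, e < (Nat.digits 10 y).length ∧ i + e = T y := by
  have hex : ∃ y, i ≤ T y := ⟨i, T_strictMono.id_le i⟩
  have hspec := Nat.find_spec hex
  have hmin := fun m (hm : m < Nat.find hex) => Nat.find_min hex hm
  generalize Nat.find hex = y at hspec hmin
  cases y with
  | zero => simp [T] at hspec; omega
  | succ x =>
    have h1 := hmin x (Nat.lt_succ_self x)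
    have h2 := T_succ x
    exact ⟨x + 1, T (x + 1) - i, by omega, by omega⟩

lemma T_pred_le {x y e : ℕ} (h : x < y) (he : e < (Nat.digits 10 y).length) :
    T x + e < T y := by
  obtain ⟨z, rfl⟩ : ∃ z, y = z + 1 := ⟨y - 1, by omega⟩
  have h1 := T_succ z
  have h2 := T_strictMono.monotone (show x ≤ z by omega)
  omega

lemma T_sub_inj {i x y d e : ℕ} (hd : d < (Nat.digits 10 x).length)
    (he : e < (Nat.digits 10 y).length) (hx : i + d = T x) (hy : i + e = T y) :
    x = y ∧ d = e := by
  rcases lt_trichotomy x y with h | h | h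
  · have := T_pred_le h he
    omega
  · subst h
    exact ⟨rfl, by omega⟩
  · have := T_pred_le h hd
    omega

lemma digit_champ_add {i j y e : ℕ} (he : e < (Nat.digits 10 y).length) (hy : i + e = T y)
    (hj : j ≤ e) : digit champ (i + j) = y / 10 ^ (e - j) % 10 := by
  rw [← digit_champ (show e - j < _ by omega)]
  congr 1
  omega

lemma digit_champ_T_add {j y : ℕ} (hj : j < (Nat.digits 10 (y + 1)).length) :
    digit champ (T y + (j + 1)) =
      (y + 1) / 10 ^ ((Nat.digits 10 (y + 1)).length - 1 - j) % 10 := by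
  rw [← digit_champ (by omega), T_succ]
  congr 1
  omega

lemma digit_champ_T_succ_ne_zero (y : ℕ) : digit champ (T y + 1) ≠ 0 := by
  have hpos := digits_length_succ_pos y
  rw [digit_champ_T_add (j := 0) hpos]
  have h1 := succ_le_ten_pow_length (y + 1)
  have h2 := (Nat.lt_digits_length_iff (b := 10) (by norm_num) (y + 1)
    (k := (Nat.digits 10 (y + 1)).length - 1)).1 (by omega)
  obtain ⟨l, hl⟩ := Nat.exists_eq_succ_of_ne_zero hpos.ne'
  rw [hl] at h1 h2 ⊢
  simp only [Nat.succ_eq_add_one, Nat.add_sub_cancel, Nat.sub_zero] at h1 h2 ⊢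
  have h3 : 1 ≤ (y + 1) / 10 ^ l := (Nat.one_le_div_iff (by positivity)).2 h2
  have h4 : (y + 1) / 10 ^ l < 10 := by
    rw [Nat.div_lt_iff_lt_mul (by positivity), ← pow_succ']
    omega
  omega

/-- The integer with a prescribed string of decimal digits. -/
lemma exists_block_value (k : ℕ) (B : Fin k → Fin 10) :
    ∃ b < 10 ^ k, ∀ j : Fin k, b / 10 ^ (k - 1 - (j : ℕ)) % 10 = (B j : ℕ) := by
  induction k with
  | zero => exact ⟨0, by simp, fun j => j.elim0⟩
  | succ k ih =>
    obtain ⟨b, hb, h⟩ := ih fun j => B j.castSucc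
    have hlast := (B (Fin.last k)).isLt
    refine ⟨10 * b + (B (Fin.last k) : ℕ), by rw [pow_succ]; omega, fun j => ?_⟩
    induction j using Fin.lastCases with
    | last =>
      simp
    | cast j =>
      rw [← h j, Fin.val_castSucc, show k + 1 - 1 - (j : ℕ) = 1 + (k - 1 - j) by omega, pow_add,
        ← Nat.div_div_eq_div_mul]
      congr 2
      omega

lemma mod_ten_pow_eq_zero {y p k : ℕ} (h : ∀ j < k, y / 10 ^ (p + j) % 10 = 0) :
    y / 10 ^ p % 10 ^ k = 0 := by
  induction k with
  | zero => simp [Nat.mod_one]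
  | succ k ih =>
    rw [Nat.mod_pow_succ, ih fun j hj => h j (by omega), Nat.div_div_eq_div_mul, ← pow_add,
      h k (by omega)]
    simp

lemma T_ten_pow_sub_one_le (n : ℕ) : T (10 ^ n - 1) ≤ n * 10 ^ n := by
  unfold T
  calc _ ≤ ∑ _j ∈ Finset.Icc 1 (10 ^ n - 1), n := by
        refine Finset.sum_le_sum fun j hj => ?_
        rw [Finset.mem_Icc] at hj
        rw [Nat.digits_length_le_iff (by norm_num)]
        have : 0 < 10 ^ n := by positivity
        omega
    _ ≤ _ := by
        simp only [Finset.sum_const, Nat.card_Icc, smul_eq_mul]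
        rw [mul_comm]
        gcongr
        have : 0 < 10 ^ n := by positivity
        omega

/-- Replacing a block of zeros in `y` by the digits of `b`, while borrowing one from the
digits on its left. -/
lemma borrow_block {k p b y : ℕ} (hk : 1 ≤ k) (hb : b < 10 ^ k) (hb' : 10 ^ (k - 1) ≤ b)
    (hy : p + k - 1 < (Nat.digits 10 y).length) (hz : y / 10 ^ p % 10 ^ k = 0) :
    ∃ y' < y, y' + 10 ^ (p + k) = y + b * 10 ^ p ∧ p + k - 1 < (Nat.digits 10 y').length ∧
      ∀ i < k, y' / 10 ^ (p + i) % 10 = b / 10 ^ i % 10 := by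
  rw [Nat.lt_digits_length_iff (by norm_num), show p + k - 1 = p + (k - 1) by omega, pow_add,
    mul_comm, ← Nat.le_div_iff_mul_le (by positivity)] at hy
  obtain ⟨q, hq⟩ := Nat.dvd_of_mod_eq_zero hz
  have hq0 : q ≠ 0 := by
    rintro rfl
    have : 0 < 10 ^ (k - 1) := by positivity
    omega
  obtain ⟨q, rfl⟩ := Nat.exists_eq_succ_of_ne_zero hq0
  have hdiv := Nat.div_add_mod y (10 ^ p)
  have hmod := Nat.mod_lt y (show 10 ^ p > 0 by positivity)
  rw [hq] at hdiv
  have hquot : ((10 ^ k * q + b) * 10 ^ p + y % 10 ^ p) / 10 ^ p = 10 ^ k * q + b := by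
    rw [add_comm, Nat.add_mul_div_right _ _ (by positivity), Nat.div_eq_of_lt hmod, zero_add]
  refine ⟨(10 ^ k * q + b) * 10 ^ p + y % 10 ^ p, ?_, ?_, ?_, fun i hi => ?_⟩
  · have := Nat.mul_lt_mul_of_pos_right hb (show 0 < 10 ^ p by positivity)
    rw [Nat.succ_eq_add_one] at hdiv
    linarith
  · rw [Nat.succ_eq_add_one] at hdiv
    rw [pow_add]
    linarith
  · rw [Nat.lt_digits_length_iff (by norm_num), show p + k - 1 = p + (k - 1) by omega, pow_add,
      mul_comm, ← Nat.le_div_iff_mul_le (by positivity), hquot]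
    omega
  · rw [pow_add, ← Nat.div_div_eq_div_mul, hquot]
    obtain ⟨d, rfl⟩ := Nat.exists_eq_add_of_lt hi
    rw [show 10 ^ (i + d + 1) * q + b = b + 10 ^ i * (10 * (10 ^ d * q)) by ring,
      Nat.add_mul_div_left _ _ (by positivity), Nat.add_mul_mod_self_left]

/-- The starting positions of the occurrences of a block of digits in `champ`. -/
lemma mem_occ_filter {k N i : ℕ} {B : Fin k → Fin 10} :
    i ∈ (Finset.Icc 1 N).filter (fun i =>
      i + k ≤ N + 1 ∧ ∀ j : Fin k, digit champ (i + (j : ℕ)) = (B j : ℕ)) ↔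
    (1 ≤ i ∧ i ≤ N) ∧ i + k ≤ N + 1 ∧ ∀ j : Fin k, digit champ (i + (j : ℕ)) = (B j : ℕ) := by
  rw [Finset.mem_filter, Finset.mem_Icc]

lemma zero_block_subset_term {k i : ℕ} (hi : 1 ≤ i)
    (h : ∀ j < k, digit champ (i + j) = 0) :
    ∃ p y, p + k - 1 < (Nat.digits 10 y).length ∧ i + (p + k - 1) = T y ∧
      y / 10 ^ p % 10 ^ k = 0 := by
  obtain ⟨y, e, he, hy⟩ := exists_T_sub hi
  have hek : k ≤ e + 1 := by
    by_contra! hlt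
    apply digit_champ_T_succ_ne_zero y
    rw [← hy, add_assoc]
    exact h (e + 1) hlt
  refine ⟨e + 1 - k, y, by omega, by omega, mod_ten_pow_eq_zero fun j hj => ?_⟩
  rw [← h (k - 1 - j) (by omega), digit_champ_add he hy (by omega)]
  congr 3
  omega

lemma exists_interior_occ {k b i : ℕ} (hk : 1 ≤ k) (hb : b < 10 ^ k) (hb' : 10 ^ (k - 1) ≤ b)
    (hi : 1 ≤ i) (h : ∀ j < k, digit champ (i + j) = 0) :
    ∃ i' p y y', p + k - 1 < (Nat.digits 10 y').length ∧
      i + (p + k - 1) = T y ∧ i' + (p + k - 1) = T y' ∧ y' + 10 ^ (p + k) = y + b * 10 ^ p ∧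
      1 ≤ i' ∧ i' ≤ i ∧
      ∀ j < k, digit champ (i' + j) = b / 10 ^ (k - 1 - j) % 10 := by
  obtain ⟨p, y, hlen, hT, hz⟩ := zero_block_subset_term hi h
  obtain ⟨y', hlt, heq, hlen', hdig⟩ := borrow_block hk hb hb' hlen hz
  have hy0 : 0 < y' := by
    rcases Nat.eq_zero_or_pos y' with rfl | h0
    · simp at hlen'
    · exact h0
  have h1 := T_pred_le hy0 hlen'
  have h2 := T_strictMono hlt
  have hT' : T y' - (p + k - 1) + (p + k - 1) = T y' := by omega
  refine ⟨T y' - (p + k - 1), p, y, y', hlen', hT, hT', heq, by omega, by omega,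
    fun j hj => ?_⟩
  rw [digit_champ_add hlen' hT' (by omega), ← hdig _ (by omega)]
  congr 3
  omega

/-- Occurrences of `b` (starting with `11`) straddling the boundary before an `l`-digit
term `x`, indexed by the free digits of `x`. -/
lemma exists_straddling_occ {k b l t : ℕ} (hk : 2 ≤ k) (hl : k ≤ l)
    (hb0 : b / 10 ^ (k - 1) % 10 = 1) (hb1 : b / 10 ^ (k - 2) % 10 = 1)
    (ht : t < 10 ^ (l - k)) :
    ∃ y, y + 1 = b % 10 ^ (k - 1) * 10 ^ (l - k + 1) + (10 * t + 2) ∧ 1 ≤ y ∧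
      (Nat.digits 10 (y + 1)).length = l ∧
      ∀ j < k, digit champ (T y + j) = b / 10 ^ (k - 1 - j) % 10 := by
  set c := b % 10 ^ (k - 1) with hc
  have hc_lt : c < 10 ^ (k - 1) := Nat.mod_lt _ (by positivity)
  have hc_dig : ∀ i < k - 1, c / 10 ^ i % 10 = b / 10 ^ i % 10 := by
    intro i hi
    obtain ⟨d, hd⟩ := Nat.exists_eq_add_of_lt hi
    conv_rhs => rw [← Nat.mod_add_div b (10 ^ (k - 1)), ← hc, hd,
      show c + 10 ^ (i + d + 1) * (b / 10 ^ (i + d + 1)) =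
        c + 10 ^ i * (10 * (10 ^ d * (b / 10 ^ (i + d + 1)))) by ring,
      Nat.add_mul_div_left _ _ (by positivity), Nat.add_mul_mod_self_left]
  have hc_ge : 10 ^ (k - 2) ≤ c := by
    have h := hc_dig (k - 2) (by omega)
    rw [hb1] at h
    by_contra! hlt
    rw [Nat.div_eq_of_lt hlt] at h
    omega
  have hw : 10 * t + 2 < 10 ^ (l - k + 1) := by
    rw [pow_succ]
    omega
  have hlen : (Nat.digits 10 (c * 10 ^ (l - k + 1) + (10 * t + 1) + 1)).length = l := by
    apply le_antisymm
    · rw [Nat.digits_length_le_iff (by norm_num)]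
      calc _ < c * 10 ^ (l - k + 1) + 10 ^ (l - k + 1) := by omega
        _ = (c + 1) * 10 ^ (l - k + 1) := by ring
        _ ≤ 10 ^ (k - 1) * 10 ^ (l - k + 1) := Nat.mul_le_mul_right _ hc_lt
        _ = 10 ^ l := by rw [← pow_add]; congr 1; omega
    · have : l - 1 < (Nat.digits 10 (c * 10 ^ (l - k + 1) + (10 * t + 1) + 1)).length := by
        rw [Nat.lt_digits_length_iff (by norm_num)]
        calc 10 ^ (l - 1) = 10 ^ (k - 2) * 10 ^ (l - k + 1) := by
              rw [← pow_add]; congr 1; omega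
          _ ≤ c * 10 ^ (l - k + 1) := Nat.mul_le_mul_right _ hc_ge
          _ ≤ _ := by omega
      omega
  refine ⟨c * 10 ^ (l - k + 1) + (10 * t + 1), by ring, by omega, hlen, fun j hj => ?_⟩
  rcases Nat.eq_zero_or_pos j with rfl | hj0
  · rw [Nat.sub_zero, hb0]
    have h := digit_champ_add (i := T (c * 10 ^ (l - k + 1) + (10 * t + 1))) (j := 0) (e := 0)
      (y := c * 10 ^ (l - k + 1) + (10 * t + 1))
      (by rw [Nat.lt_digits_length_iff (by norm_num)]; omega) rfl le_rfl
    rw [h, pow_succ, ← mul_assoc]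
    omega
  · obtain ⟨j, rfl⟩ : ∃ i, j = i + 1 := ⟨j - 1, by omega⟩
    rw [digit_champ_T_add (by omega), hlen, ← hc_dig _ (by omega),
      show l - 1 - j = (l - k + 1) + (k - 1 - (j + 1)) by omega, pow_add _ (l - k + 1),
      ← Nat.div_div_eq_div_mul, add_assoc, add_comm (c * _),
      Nat.add_mul_div_right _ _ (by positivity), Nat.div_eq_of_lt hw, zero_add]

lemma occ_zero_add_le_occ {k l N : ℕ} (hk : 2 ≤ k) (hl : k ≤ l) (hN : T (10 ^ l - 1) ≤ N)
    (B : Fin k → Fin 10) (h1 : (B ⟨0, by omega⟩ : ℕ) = 1) (h2 : (B ⟨1, by omega⟩ : ℕ) = 1) :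
    occ champ (fun _ : Fin k => (0 : Fin 10)) N + 10 ^ (l - k) ≤ occ champ B N := by
  obtain ⟨b, hb, hbB⟩ := exists_block_value k B
  have hb0 : b / 10 ^ (k - 1) % 10 = 1 := h1 ▸ hbB ⟨0, by omega⟩
  have hb1 : b / 10 ^ (k - 2) % 10 = 1 := h2 ▸ hbB ⟨1, by omega⟩
  have hb' : 10 ^ (k - 1) ≤ b := by
    by_contra! hlt
    rw [Nat.div_eq_of_lt hlt] at hb0
    omega
  unfold occ
  set Z := (Finset.Icc 1 N).filter fun i =>
    i + k ≤ N + 1 ∧ ∀ j : Fin k, digit champ (i + (j : ℕ)) = ((0 : Fin 10) : ℕ) with hZ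
  have hinterior : ∀ i ∈ Z, _ := fun i hi =>
    have hi' := mem_occ_filter.1 hi
    exists_interior_occ (by omega) hb hb' hi'.1.1 fun j hj => hi'.2.2 ⟨j, hj⟩
  choose! f p y y' hlen hT hT' heq hf1 hfi hfd using hinterior
  have hstr := fun t ht => exists_straddling_occ (t := t) hk hl hb0 hb1 ht
  choose! z hz hz1 hzlen hzd using hstr
  have hzpos : ∀ t, t < 10 ^ (l - k) → 0 < (Nat.digits 10 (z t)).length := fun t ht => by
    rw [Nat.lt_digits_length_iff (by norm_num)]
    exact hz1 t ht
  have hfinj : Set.InjOn f Z := by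
    intro i hi i' hi' h
    obtain ⟨hy, hp⟩ := T_sub_inj (hlen i hi) (hlen i' hi') (hT' i hi) (h ▸ hT' i' hi')
    have hp' : p i = p i' := by omega
    have e1 := heq i hi
    have e2 := heq i' hi'
    have e3 := hT i hi
    have e4 := hT i' hi'
    rw [hp', hy] at e1
    have hyy : y i = y i' := by omega
    rw [hp', hyy] at e3
    omega
  have hginj : Set.InjOn (fun t => T (z t)) (Finset.range (10 ^ (l - k)) : Set ℕ) := by
    intro t ht t' ht' h
    have e := T_strictMono.injective h
    have e1 := hz t (by simpa using ht)
    have e2 := hz t' (by simpa using ht')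
    rw [e] at e1
    omega
  have hdisj : Disjoint (Z.image f) ((Finset.range (10 ^ (l - k))).image fun t => T (z t)) := by
    rw [Finset.disjoint_left]
    intro a ha ha'
    obtain ⟨i, hi, rfl⟩ := Finset.mem_image.1 ha
    obtain ⟨t, ht, hte⟩ := Finset.mem_image.1 ha'
    have := (T_sub_inj (hlen i hi) (hzpos t (by simpa using ht)) (hT' i hi) hte.symm).2
    omega
  rw [← Finset.card_image_of_injOn hfinj, ← Finset.card_range (10 ^ (l - k)),
    ← Finset.card_image_of_injOn hginj, ← Finset.card_union_of_disjoint hdisj]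
  apply Finset.card_le_card
  intro a ha
  rw [mem_occ_filter]
  rcases Finset.mem_union.1 ha with ha | ha
  · obtain ⟨i, hi, rfl⟩ := Finset.mem_image.1 ha
    have hi' := mem_occ_filter.1 hi
    have := hfi i hi
    exact ⟨⟨hf1 i hi, by omega⟩, by omega, fun j => by rw [hfd i hi j j.2, hbB]⟩
  · obtain ⟨t, ht, rfl⟩ := Finset.mem_image.1 ha
    have ht' : t < 10 ^ (l - k) := by simpa using ht
    have e1 := (T_strictMono.id_le (z t)).trans' (hz1 t ht')
    have e2 := T_succ (z t)
    have e3 : z t + 1 < 10 ^ l := (Nat.digits_length_le_iff (by norm_num) _).1 (hzlen t ht').le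
    have e4 := T_strictMono.monotone (show z t + 1 ≤ 10 ^ l - 1 by omega)
    rw [hzlen t ht'] at e2
    exact ⟨⟨e1, by omega⟩, by omega, fun j => by rw [hzd t ht' j j.2, hbB]⟩

lemma exists_T_ten_pow_le {m N : ℕ} (hN : T (10 ^ m - 1) ≤ N) :
    ∃ l, m ≤ l ∧ T (10 ^ l - 1) ≤ N ∧ N < T (10 ^ (l + 1) - 1) := by
  have hex : ∃ n, N < T (10 ^ n - 1) :=
    ⟨N + 1, (T_strictMono.id_le _).trans_lt' (by
      have := Nat.lt_pow_self (n := N + 1) (a := 10) (by norm_num)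
      show N < 10 ^ (N + 1) - 1
      omega)⟩
  have hspec := Nat.find_spec hex
  have hmin := fun n (hn : n < Nat.find hex) => Nat.find_min hex hn
  generalize Nat.find hex = n at hspec hmin
  have hmn : m < n := by
    by_contra! h
    have := T_strictMono.monotone (show 10 ^ n - 1 ≤ 10 ^ m - 1 from
      Nat.sub_le_sub_right (Nat.pow_le_pow_right (by norm_num) h) 1)
    omega
  obtain ⟨l, rfl⟩ : ∃ l, n = l + 1 := ⟨n - 1, by omega⟩
  exact ⟨l, by omega, not_lt.1 (hmin l (Nat.lt_succ_self l)), hspec⟩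

lemma two_lt_log_ten : 2 < Real.log 10 := by
  rw [Real.lt_log_iff_exp_lt (by norm_num), show (2 : ℝ) = 1 + 1 by norm_num, Real.exp_add]
  nlinarith [Real.exp_one_lt_d9, Real.exp_pos 1]

lemma div_log_le {k l N : ℕ} (hk : k ≤ l) (hl : 3 ≤ l) (h1 : T (10 ^ l - 1) ≤ N)
    (h2 : N < T (10 ^ (l + 1) - 1)) :
    (N : ℝ) / (10 ^ (k + 1) * Real.log N) ≤ 10 ^ (l - k) := by
  have hlo : 10 ^ (l - 1) ≤ N := by
    refine le_trans ?_ ((T_strictMono.id_le _).trans h1)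
    obtain ⟨m, rfl⟩ : ∃ m, l = m + 1 := ⟨l - 1, by omega⟩
    have : 0 < 10 ^ m := by positivity
    rw [pow_succ]
    show 10 ^ (m + 1 - 1) ≤ 10 ^ m * 10 - 1
    rw [Nat.add_sub_cancel]
    omega
  have hhi : (N : ℝ) ≤ (l + 1) * 10 ^ (l + 1) := by
    exact_mod_cast h2.le.trans (T_ten_pow_sub_one_le (l + 1))
  have hlog : (l : ℝ) + 1 ≤ Real.log N := by
    have h3 : Real.log (10 ^ (l - 1)) ≤ Real.log N :=
      Real.log_le_log (by positivity) (by exact_mod_cast hlo)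
    rw [Real.log_pow, Nat.cast_sub (by omega)] at h3
    have h4 : (3 : ℝ) ≤ l := by exact_mod_cast hl
    have h5 := two_lt_log_ten
    push_cast at h3
    nlinarith
  have hpos : (0 : ℝ) < Real.log N := lt_of_lt_of_le (by positivity) hlog
  rw [div_le_iff₀ (by positivity)]
  calc (N : ℝ) ≤ (l + 1) * 10 ^ (l + 1) := hhi
    _ ≤ Real.log N * 10 ^ (l + 1) := by gcongr
    _ = 10 ^ (l - k) * (10 ^ (k + 1) * Real.log N) := by
      rw [show l + 1 = (l - k) + (k + 1) by omega, pow_add]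
      ring

/-- For `k ≥ 2`, any block `B₁` of length `k` starting with two `1`s, and the
all-zeros block `B₂` of length `k`: there is `N₀` such that for all `N ≥ N₀`,
`occ(c, B₁, N) − occ(c, B₂, N) ≥ N / (10^{k+1}·log N)`. -/
theorem occ_champ_witness_diff (k : ℕ) (hk : 2 ≤ k) (B₁ : Fin k → Fin 10)
    (h1 : (B₁ ⟨0, by omega⟩ : ℕ) = 1) (h2 : (B₁ ⟨1, by omega⟩ : ℕ) = 1) :
    ∃ N₀ : ℕ, ∀ N : ℕ, N₀ ≤ N →
      (occ champ B₁ N : ℝ) - (occ champ (fun _ : Fin k => (0 : Fin 10)) N : ℝ) ≥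
        (N : ℝ) / (10 ^ (k + 1) * Real.log N) := by
  refine ⟨T (10 ^ (k + 3) - 1), fun N hN => ?_⟩
  obtain ⟨l, hl, hlo, hhi⟩ := exists_T_ten_pow_le hN
  have hocc : (occ champ (fun _ : Fin k => (0 : Fin 10)) N : ℝ) + 10 ^ (l - k) ≤
      occ champ B₁ N := by
    exact_mod_cast occ_zero_add_le_occ hk (by omega) hlo B₁ h1 h2
  have hdiv := div_log_le (k := k) (by omega) (by omega) hlo hhi
  linarith
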